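/- Let λ ≥ -1/2 be a real number and Δ ≥ 3. Let U be a unicyclic graph with n vertices and maximum degree Δ that has a vertex a of degree Δ lying on its cycle. If a is adjacent to at least three vertices of degree greater than one, then there exists a unicyclic graph U' with n vertices and maximum degree Δ such that GRM_λ(U') < GRM_λ(U). -/

import Mathlib

open SimpleGraph

/-- Degree of a vertex (classical decidability). -/
noncomputable def deg {V : Type*} [Fintype V] (G : SimpleGraph V) (v : V) : ℕ :=
  letI := Classical.decEq V
  letI : DecidableRel G.Adj := Classical.decRel _
  G.degree v

/-- Maximum degree of a graph (classical decidability). -/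
noncomputable def maxDeg {V : Type*} [Fintype V] (G : SimpleGraph V) : ℕ :=
  letI := Classical.decEq V
  letI : DecidableRel G.Adj := Classical.decRel _
  G.maxDegree

/-- The general reduced second Zagreb index
`GRM_λ(G) = Σ_{ab ∈ E(G)} (deg a + λ)(deg b + λ)`. -/
noncomputable def GRM {V : Type*} [Fintype V] (l : ℝ) (G : SimpleGraph V) : ℝ :=
  letI := Classical.decEq V
  letI : DecidableRel G.Adj := Classical.decRel _
  ∑ e ∈ G.edgeFinset,
    Sym2.lift ⟨fun a b => ((G.degree a : ℝ) + l) * ((G.degree b : ℝ) + l),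
      fun a b => by ring⟩ e

/-- A unicyclic graph: connected with exactly as many edges as vertices. -/
def IsUnicyclic {V : Type*} [Fintype V] (G : SimpleGraph V) : Prop :=
  G.Connected ∧ G.edgeSet.ncard = Fintype.card V

/-- A vertex lies on a cycle of `G`. -/
def OnCycle {V : Type*} (G : SimpleGraph V) (v : V) : Prop :=
  ∃ (u : V) (w : G.Walk u u), w.IsCycle ∧ v ∈ w.support

/-!
Every competitor is obtained from `U` by exchanging one or two edges. The exchange must lower the
index while preserving connectedness, the number of edges, the degree of `a`, and `deg a` as an upper
bound for the degrees. Writing the index as a weighted edge sum, which is additive in the edges, and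
recording how this sum changes when one unit of degree moves from one vertex to another
(`edgeSum_sup_edge`, `edgeSum_move`), makes each exchange a short computation.

Let `ax` be an edge of the cycle and `T = U - ax`, a tree. At most two nonleaf neighbours of `a` are
`x` or the first vertex of the path from `a` to `x` in `T`, so there is a third one, `b`; it is the
root of a branch hanging from `a`, no other vertex of which is adjacent to `a`. The end of a longest
path from `b` inside this branch is a leaf `z` of `U`, with a neighbour `p ≠ a`.

* If some `v ≠ a` has degree at least three, and `v = p` or `deg p = 2`, then a suitable edge `vu` can
  be replaced by `zu` (`exists_lt_of_branch`). The index drops by at least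
  `(deg v - 2) * (1 + 2 * l) + 1`, which is where `l ≥ -1/2` enters. Applying this to `v = p` first,
  one may assume `deg p = 2`, and then that all vertices other than `a` have degree at most two.
* In that case let `c ≠ a` be the other neighbour of `b`. Replacing `ax` and `bc` by `ac` and `zx`
  inserts the branch below `b` into the cycle and leaves `b` as a leaf at `a`; again the index drops
  (`exists_lt_of_pendant`).
-/

/-! ### Weighted edge sums -/

open Classical in
/-- The edge sum of `f u * f v`, written as half of the sum over ordered pairs. -/
noncomputable def edgeSum {V : Type*} [Fintype V] (G : SimpleGraph V) (f : V → ℝ) : ℝ :=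
  (∑ u, ∑ v, if G.Adj u v then f u * f v else 0) / 2

section Weights

variable {V : Type*} [Fintype V]

open Classical in
lemma deg_eq_sum (G : SimpleGraph V) (v : V) :
    (deg G v : ℝ) = ∑ w, if G.Adj v w then (1 : ℝ) else 0 := by
  unfold deg
  rw [← SimpleGraph.card_neighborFinset_eq_degree]
  simp only [Finset.sum_boole]
  congr 2
  ext w
  simp

open Classical in
lemma GRM_eq_edgeSum (l : ℝ) (G : SimpleGraph V) :
    GRM l G = edgeSum G (fun v => (deg G v : ℝ) + l) := by
  set f : V → ℝ := fun v => (deg G v : ℝ) + l with hf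
  set F : Sym2 V → ℝ := Sym2.lift ⟨fun a b => f a * f b, fun a b => by ring⟩ with hF
  have h1 : GRM l G = ∑ e ∈ G.edgeFinset, F e := by
    unfold GRM
    apply Finset.sum_congr
    · ext; simp
    · intro e _
      rfl
  have h2 : ∑ d : G.Dart, F d.edge = 2 * ∑ e ∈ G.edgeFinset, F e := by
    rw [← Finset.sum_fiberwise_of_maps_to (t := G.edgeFinset) (g := fun d : G.Dart => d.edge)
      (fun d _ => by rw [SimpleGraph.mem_edgeFinset]; exact d.edge_mem), Finset.mul_sum]
    refine Finset.sum_congr rfl fun e he => ?_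
    rw [Finset.sum_congr rfl (g := fun _ => F e)
      (fun d hd => by rw [(Finset.mem_filter.1 hd).2])]
    rw [Finset.sum_const, G.dart_edge_fiber_card e (SimpleGraph.mem_edgeFinset.1 he)]
    simp
  have h3 : ∑ d : G.Dart, F d.edge = ∑ u, ∑ v, if G.Adj u v then f u * f v else 0 := by
    rw [← Finset.sum_product', ← Finset.sum_filter]
    refine Finset.sum_bij' (fun d _ => (d.fst, d.snd))
      (fun xy h => ⟨xy, (Finset.mem_filter.1 h).2⟩) ?_ ?_ ?_ ?_ ?_ <;>
      simp [hF, SimpleGraph.Dart.edge]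
  unfold edgeSum
  linarith [h2.symm.trans h3]

lemma sup_edge_adj_ite {V : Type*} (H : SimpleGraph V) {s t : V} (hst : s ≠ t) (u v : V) :
    (H ⊔ edge s t).Adj u v ↔ H.Adj u v ∨ (u = s ∧ v = t) ∨ (u = t ∧ v = s) := by
  simp only [sup_adj, edge_adj]
  constructor
  · tauto
  · rintro (h | ⟨rfl, rfl⟩ | ⟨rfl, rfl⟩)
    · exact Or.inl h
    · exact Or.inr ⟨Or.inl ⟨rfl, rfl⟩, hst⟩
    · exact Or.inr ⟨Or.inr ⟨rfl, rfl⟩, hst.symm⟩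

open Classical in
lemma edgeSum_sup_edge (H : SimpleGraph V) (f : V → ℝ) {s t : V} (hst : s ≠ t)
    (hn : ¬ H.Adj s t) : edgeSum (H ⊔ edge s t) f = edgeSum H f + f s * f t := by
  have hadj := sup_edge_adj_ite H hst
  generalize H ⊔ edge s t = K at hadj ⊢
  have key : ∀ u v, (if K.Adj u v then f u * f v else 0) =
      (if H.Adj u v then f u * f v else 0) + (if u = s then if v = t then f s * f t else 0 else 0)
        + (if u = t then if v = s then f s * f t else 0 else 0) := by
    intro u v
    have hn' : ¬ H.Adj t s := fun h => hn h.symm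
    by_cases h1 : u = s ∧ v = t
    · obtain ⟨rfl, rfl⟩ := h1
      simp [hn, hst, hadj]
    by_cases h2 : u = t ∧ v = s
    · obtain ⟨rfl, rfl⟩ := h2
      simp [hn', hst.symm, hadj, mul_comm]
    have h3 : K.Adj u v ↔ H.Adj u v := by rw [hadj]; tauto
    have e1 : (if u = s then if v = t then f s * f t else 0 else 0) = 0 := by
      split_ifs <;> tauto
    have e2 : (if u = t then if v = s then f s * f t else 0 else 0) = 0 := by
      split_ifs <;> tauto
    rw [e1, e2]; simp [h3]
  have : (∑ u, ∑ v, if K.Adj u v then f u * f v else 0) =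
      (∑ u, ∑ v, if H.Adj u v then f u * f v else 0) + 2 * (f s * f t) := by
    simp only [key, Finset.sum_add_distrib]
    simp
    ring
  unfold edgeSum
  rw [this]
  ring

open Classical in
lemma deg_sup_edge (H : SimpleGraph V) {s t : V} (hst : s ≠ t) (hn : ¬ H.Adj s t) (w : V) :
    (deg (H ⊔ edge s t) w) = deg H w + (if w = s then 1 else 0) + (if w = t then 1 else 0) := by
  have hadj := sup_edge_adj_ite H hst
  generalize H ⊔ edge s t = K at hadj ⊢
  have : (deg K w : ℝ) =
      deg H w + (if w = s then 1 else 0) + (if w = t then 1 else 0) := by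
    simp only [deg_eq_sum]
    have key : ∀ v, (if K.Adj w v then (1 : ℝ) else 0) =
        (if H.Adj w v then 1 else 0) + (if v = t then if w = s then 1 else 0 else 0)
          + (if v = s then if w = t then 1 else 0 else 0) := by
      intro v
      have hn' : ¬ H.Adj t s := fun h => hn h.symm
      rw [if_congr (hadj w v) rfl rfl]
      grind
    simp only [key, Finset.sum_add_distrib]
    simp
  exact_mod_cast this

open Classical in
/-- Changing the weight of a single vertex `z` by `c` changes the edge sum by `c` times the
total weight of the neighbours of `z`. -/
lemma edgeSum_shift (H : SimpleGraph V) (f : V → ℝ) (z : V) (c : ℝ) :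
    edgeSum H (fun w => f w + if w = z then c else 0) =
      edgeSum H f + c * ∑ s, if H.Adj z s then f s else 0 := by
  have key : ∀ u v, (if H.Adj u v then (f u + if u = z then c else 0) *
      (f v + if v = z then c else 0) else 0) =
      (if H.Adj u v then f u * f v else 0) + (if u = z then if H.Adj z v then c * f v else 0 else 0)
        + (if v = z then if H.Adj z u then c * f u else 0 else 0) := by
    intro u v
    have := H.adj_comm u v
    have h0 := H.irrefl (v := z)
    by_cases hu : u = z <;> by_cases hv : v = z
    · subst hu hv; simp
    · subst hu; simp [hv]; split_ifs <;> ring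
    · subst hv; simp [hu, this]; split_ifs <;> ring
    · simp [hu, hv]
  have : (∑ u, ∑ v, if H.Adj u v then (f u + if u = z then c else 0) *
      (f v + if v = z then c else 0) else 0) =
      (∑ u, ∑ v, if H.Adj u v then f u * f v else 0) +
        2 * (c * ∑ s, if H.Adj z s then f s else 0) := by
    simp only [key, Finset.sum_add_distrib, Finset.mul_sum, mul_ite, mul_zero]
    simp
    rw [add_assoc, ← Finset.sum_add_distrib]
    congr 1
    refine Finset.sum_congr rfl fun x _ => ?_
    split_ifs <;> ring
  unfold edgeSum
  rw [this]
  ring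

open Classical in
/-- Moving one unit of weight from `v` to `z`. -/
lemma edgeSum_move (H : SimpleGraph V) (f g : V → ℝ) (v z : V)
    (hg : ∀ w, g w = f w - (if w = v then 1 else 0) + (if w = z then 1 else 0)) :
    edgeSum H g = edgeSum H f - (∑ s, if H.Adj v s then f s else 0)
      + ((∑ s, if H.Adj z s then f s else 0) - if H.Adj z v then 1 else 0) := by
  have h1 : g = fun w => (fun w => f w + if w = v then (-1) else 0) w + if w = z then 1 else 0 := by
    funext w
    rw [hg]
    by_cases h : w = v <;> simp [h, sub_eq_add_neg]
  rw [h1, edgeSum_shift, edgeSum_shift]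
  have : (∑ s, if H.Adj z s then (f s + if s = v then (-1) else 0) else 0) =
      (∑ s, if H.Adj z s then f s else 0) +
        ∑ s, if s = v then (if H.Adj z v then (-1) else 0) else 0 := by
    rw [← Finset.sum_add_distrib]
    refine Finset.sum_congr rfl fun s _ => ?_
    by_cases h : s = v
    · subst h; by_cases h' : H.Adj z s <;> simp [h']
    · simp [h]
  rw [this]
  simp
  split_ifs <;> ring

end Weights

/-! ### Degrees and connectivity -/

section Graphs

variable {V : Type*} [Fintype V]

open Classical in
lemma deg_eq_card (G : SimpleGraph V) (v : V) :
    deg G v = (Finset.univ.filter (fun w => G.Adj v w)).card := by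
  have := deg_eq_sum G v
  rw [Finset.sum_boole] at this
  exact_mod_cast this

lemma one_le_deg {G : SimpleGraph V} {v x : V} (h : G.Adj v x) : 1 ≤ deg G v := by
  classical
  rw [deg_eq_card]
  exact Finset.card_pos.2 ⟨x, by simpa using h⟩

lemma two_le_deg {G : SimpleGraph V} {v x y : V} (hx : G.Adj v x) (hy : G.Adj v y)
    (hxy : x ≠ y) : 2 ≤ deg G v := by
  classical
  rw [deg_eq_card, ← Finset.card_pair hxy]
  refine Finset.card_le_card fun w hw => ?_
  simp only [Finset.mem_insert, Finset.mem_singleton] at hw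
  rcases hw with rfl | rfl <;> simpa

lemma eq_or_eq_of_deg_le_two {G : SimpleGraph V} {v x y w : V} (hd : deg G v ≤ 2)
    (hx : G.Adj v x) (hy : G.Adj v y) (hxy : x ≠ y) (hw : G.Adj v w) : w = x ∨ w = y := by
  classical
  by_contra! h
  rw [deg_eq_card] at hd
  have : ({w, x, y} : Finset V).card ≤ 2 := by
    refine (Finset.card_le_card fun c hc => ?_).trans hd
    simp only [Finset.mem_insert, Finset.mem_singleton] at hc
    rcases hc with rfl | rfl | rfl <;> simpa
  rw [Finset.card_eq_three.2 ⟨w, x, y, h.1, h.2, hxy, rfl⟩] at this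
  omega

lemma eq_of_deg_eq_one {G : SimpleGraph V} {v x y : V} (hd : deg G v = 1)
    (hx : G.Adj v x) (hy : G.Adj v y) : x = y := by
  by_contra h
  have := two_le_deg hx hy h
  omega

lemma deg_eq_one {G : SimpleGraph V} {v x : V} (hx : G.Adj v x)
    (h : ∀ y, G.Adj v y → y = x) : deg G v = 1 := by
  classical
  rw [deg_eq_card, Finset.card_eq_one]
  exact ⟨x, by ext y; simpa using ⟨h y, fun e => e ▸ hx⟩⟩

/-- A vertex has a neighbour outside any set of vertices with fewer elements than its degree. -/
lemma exists_adj_notMem {G : SimpleGraph V} {v : V} (S : Finset V) (h : S.card < deg G v) :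
    ∃ u, G.Adj v u ∧ u ∉ S := by
  classical
  rw [deg_eq_card] at h
  obtain ⟨u, hu, hS⟩ := Finset.exists_mem_notMem_of_card_lt_card h
  exact ⟨u, by simpa using hu, hS⟩

lemma ncard_edgeSet_sup_edge (H : SimpleGraph V) {s t : V} (hst : s ≠ t) (hn : ¬ H.Adj s t) :
    (H ⊔ edge s t).edgeSet.ncard = H.edgeSet.ncard + 1 := by
  classical
  rw [edgeSet_sup, edgeSet_edge_of_ne hst, Set.union_singleton,
    Set.ncard_insert_of_notMem (by simpa using hn) (Set.toFinite _)]

lemma connected_of_forall_adj_reachable {V : Type*} {G K : SimpleGraph V} (hG : G.Connected)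
    (h : ∀ x y, G.Adj x y → K.Reachable x y) : K.Connected := by
  have := hG.nonempty
  refine ⟨fun x y => ?_⟩
  obtain ⟨w⟩ := hG.preconnected x y
  induction w with
  | nil => exact Reachable.refl _
  | cons hadj _ ih => exact (h _ _ hadj).trans ih

lemma deleteEdges_sup_edge {V : Type*} {G : SimpleGraph V} {s t : V} (h : G.Adj s t) :
    G = G.deleteEdges {s(s, t)} ⊔ edge s t := by
  ext x y
  rw [sup_edge_adj_ite _ h.ne, deleteEdges_adj]
  simp only [Set.mem_singleton_iff, Sym2.eq_iff]
  constructor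
  · tauto
  · rintro (h' | ⟨rfl, rfl⟩ | ⟨rfl, rfl⟩)
    exacts [h'.1, h, h.symm]

lemma maxDeg_eq {G : SimpleGraph V} {a : V} {Δ : ℕ} (ha : deg G a = Δ)
    (h : ∀ w, deg G w ≤ Δ) : maxDeg G = Δ := by
  classical
  unfold maxDeg
  have : Nonempty V := ⟨a⟩
  apply le_antisymm
  · exact @maxDegree_le_of_forall_degree_le _ _ _ (_) _ fun w => h w
  · rw [← ha]; exact @degree_le_maxDegree _ _ _ (_) _

lemma deg_le_maxDeg (G : SimpleGraph V) (w : V) : deg G w ≤ maxDeg G := by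
  unfold deg maxDeg
  exact @degree_le_maxDegree _ _ _ (_) _

/-- The neighbour `s` of `v` towards a vertex `w`: it is `w` or has degree at least two, and
deleting any edge of `v` other than the one to `s` does not separate `w` from `v`. -/
lemma exists_adj_towards {G : SimpleGraph V} (hG : G.Connected) {v w : V} (hvw : v ≠ w) :
    ∃ s, G.Adj v s ∧ (s = w ∨ 2 ≤ deg G s) ∧
      ∀ u, u ≠ s → (G.deleteEdges {s(v, u)}).Reachable w v := by
  obtain ⟨P, hP⟩ := (hG.preconnected v w).exists_isPath
  cases P with
  | nil => exact absurd rfl hvw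
  | @cons _ s _ h Q =>
    rw [Walk.cons_isPath_iff] at hP
    refine ⟨s, h, ?_, fun u hu => ?_⟩
    · cases Q with
      | nil => exact Or.inl rfl
      | @cons _ c _ h' R =>
        refine Or.inr (two_le_deg h.symm h' ?_)
        rintro rfl
        exact hP.2 (by simp)
    · refine Reachable.symm ⟨(Walk.cons h Q).toDeleteEdges _ ?_⟩
      intro e he heu
      rw [Set.mem_singleton_iff] at heu
      subst heu
      rw [Walk.edges_cons, List.mem_cons] at he
      rcases he with he | he
      · rw [Sym2.eq_iff] at he
        rcases he with ⟨_, he⟩ | ⟨he, _⟩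
        · exact hu he
        · exact h.ne he
      · exact hP.2 (Q.fst_mem_support_of_mem_edges he)

end Graphs

/-! ### Two edge exchanges that lower the index -/

section Surgeries

variable {V : Type*} [Fintype V]

/-- If `v ≠ a` has degree at least three and `z` is a leaf whose neighbour is `v` or has degree
two, then moving the end `v` of an edge `vu` to `z` lowers the index. The neighbour `s ≠ u` of `v`
with degree at least two is what makes the inequality strict at `l = -1/2`. -/
lemma exists_lt_of_branch {l : ℝ} (hl : -1/2 ≤ l) {U : SimpleGraph V} (hU : IsUnicyclic U)
    {a v u z p s : V} (hmax : ∀ w, deg U w ≤ deg U a) (hva : v ≠ a) (hd : 3 ≤ deg U v)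
    (hvu : U.Adj v u) (huz : u ≠ z) (hz : deg U z = 1) (hzp : U.Adj z p) (hup : u ≠ p)
    (hs : U.Adj v s) (hsu : s ≠ u) (hs2 : 2 ≤ deg U s) (hp : p = v ∨ deg U p = 2)
    (hr : (U.deleteEdges {s(v, u)}).Reachable z v) :
    ∃ U' : SimpleGraph V, IsUnicyclic U' ∧ deg U' a = deg U a ∧
      (∀ w, deg U' w ≤ deg U a) ∧ GRM l U' < GRM l U := by
  classical
  have hzv : z ≠ v := by rintro rfl; omega
  have hza : z ≠ a := by rintro rfl; have := hmax v; omega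
  obtain ⟨H, hH⟩ : ∃ H, H = U.deleteEdges {s(v, u)} := ⟨_, rfl⟩
  have hHle : H ≤ U := hH ▸ deleteEdges_le _
  rw [← hH] at hr
  have hUH : U = H ⊔ edge v u := hH ▸ deleteEdges_sup_edge hvu
  have hHvu : ¬ H.Adj v u := by simp [hH]
  have hHzu : ¬ H.Adj z u := fun h => hup (eq_of_deg_eq_one hz (hHle h) hzp)
  have hle : H ≤ H ⊔ edge z u := le_sup_left
  have hdU := deg_sup_edge H hvu.ne hHvu
  have hdU' := deg_sup_edge H huz.symm hHzu
  rw [← hUH] at hdU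
  have hGU : GRM l U = edgeSum H (fun w => deg U w + l)
      + ((deg U v : ℝ) + l) * ((deg U u : ℝ) + l) := by
    rw [GRM_eq_edgeSum]
    conv_lhs => rw [hUH]
    rw [edgeSum_sup_edge H _ hvu.ne hHvu, ← hUH]
  have hdz : deg (H ⊔ edge z u) z = 2 := by
    have h1 := hdU z; have h2 := hdU' z
    simp [hzv, huz.symm] at h1 h2
    omega
  have hdu : deg (H ⊔ edge z u) u = deg U u := by
    have h1 := hdU u; have h2 := hdU' u
    simp [huz, hvu.ne'] at h1 h2
    omega
  have hGU' : GRM l (H ⊔ edge z u) = edgeSum H (fun w => deg (H ⊔ edge z u) w + l)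
      + (2 + l) * ((deg U u : ℝ) + l) := by
    rw [GRM_eq_edgeSum, edgeSum_sup_edge H _ huz.symm hHzu, hdz, hdu]
    norm_num
  have hmove := edgeSum_move H (fun w => deg U w + l) (fun w => deg (H ⊔ edge z u) w + l) v z (by
    intro w
    simp only [hdU, hdU']
    push_cast
    ring)
  refine ⟨H ⊔ edge z u, ⟨?_, ?_⟩, ?_, ?_, ?_⟩
  · refine connected_of_forall_adj_reachable hU.1 fun x y hxy => ?_
    have hvu' : (H ⊔ edge z u).Reachable v u :=
      (hr.symm.mono hle).trans (Adj.reachable (by rw [sup_edge_adj_ite H huz.symm]; simp))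
    rw [hUH, sup_edge_adj_ite H hvu.ne] at hxy
    rcases hxy with h | ⟨rfl, rfl⟩ | ⟨rfl, rfl⟩
    exacts [(hle h).reachable, hvu', hvu'.symm]
  · rw [ncard_edgeSet_sup_edge H huz.symm hHzu, ← ncard_edgeSet_sup_edge H hvu.ne hHvu, ← hUH]
    exact hU.2
  · have h1 := hdU a; have h2 := hdU' a
    simp [hva.symm, hza.symm] at h1 h2
    omega
  · intro w
    have h1 := hdU w; have h2 := hdU' w; have h3 := hmax w; have h4 := hmax v
    by_cases hwz : w = z
    · subst hwz; omega
    · simp [hwz] at h1 h2; omega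
  · have hHv : deg U v = deg H v + 1 := by simpa [hvu.ne] using hdU v
    have hHs : H.Adj v s := by
      simp [hH, hs, hsu, hvu.ne]
    have hSv : (deg H v : ℝ) * (1 + l) + 1 ≤ ∑ t, if H.Adj v t then (deg U t : ℝ) + l else 0 := by
      have e : (deg H v : ℝ) * (1 + l) + 1 =
          ∑ t, ((if H.Adj v t then (1 : ℝ) else 0) * (1 + l) + if t = s then 1 else 0) := by
        rw [Finset.sum_add_distrib, ← Finset.sum_mul, ← deg_eq_sum]
        simp
      rw [e]
      refine Finset.sum_le_sum fun t _ => ?_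
      by_cases ht : t = s
      · subst ht
        have : (2 : ℝ) ≤ deg U t := by exact_mod_cast hs2
        simp [hHs]; linarith
      · by_cases hvt : H.Adj v t
        · have : (1 : ℝ) ≤ deg U t := by exact_mod_cast one_le_deg (hHle hvt).symm
          simpa [hvt, ht] using one_le_deg (hHle hvt).symm
        · simp [hvt, ht]
    have hHz : ∀ t, H.Adj z t ↔ t = p := by
      intro t
      refine ⟨fun h => eq_of_deg_eq_one hz (hHle h) hzp, ?_⟩
      rintro rfl
      simp [hH, hzp, hzv, huz.symm]
    simp only [hHz, Finset.sum_ite_eq', Finset.mem_univ, if_true] at hmove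
    have hu1 : (1 : ℝ) ≤ deg U u := by exact_mod_cast one_le_deg hvu.symm
    have hd3 : (3 : ℝ) ≤ deg U v := by exact_mod_cast hd
    have hHv' : (deg H v : ℝ) = deg U v - 1 := by rw [hHv]; push_cast; ring
    rw [hHv'] at hSv
    rw [hGU, hGU', hmove]
    have hp' : (deg U p : ℝ) + l - (if v = p then 1 else 0) ≤ deg U v - 1 + l := by
      rcases hp with rfl | hp
      · simp; linarith
      · rw [hp]; split_ifs <;> push_cast <;> linarith
    have hk1 := mul_nonneg (sub_nonneg.2 hu1) (show (0 : ℝ) ≤ deg U v - 2 by linarith)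
    have hk2 := mul_nonneg (show (0 : ℝ) ≤ l + 1 / 2 by linarith)
      (show (0 : ℝ) ≤ deg U v - 2 by linarith)
    simp only [eq_comm (a := v) (b := p)] at hp' hmove ⊢
    nlinarith

/-- Suppose `a` has maximum degree at least three, the path `a, b, c` has `deg b = 2`, `deg c ≤ 2`
and `c` not adjacent to `a`, the edge `ax` lies on a cycle avoiding `bc` (this is `hr`), and `z` is a
leaf whose neighbour `p` has degree two (possibly `z = c`, `p = b`). Replacing the edges `ax`, `bc` by
`ac`, `zx` turns `b` into a leaf at `a` and lowers the index, for every real `l`: the drop is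
`(deg a - 2) * (deg x - 1)` if `z = c` and `(deg a - 2) * (deg x - deg c + 1)` otherwise. -/
lemma exists_lt_of_pendant {l : ℝ} {U : SimpleGraph V} (hU : IsUnicyclic U)
    {a x b c z p : V} (hmax : ∀ w, deg U w ≤ deg U a) (ha : 3 ≤ deg U a)
    (hax : U.Adj a x) (hx : 2 ≤ deg U x) (hab : U.Adj a b) (hbx : b ≠ x) (hb : deg U b = 2)
    (hbc : U.Adj b c) (hca : c ≠ a) (hac : ¬ U.Adj a c) (hc : deg U c ≤ 2)
    (hz : deg U z = 1) (hzp : U.Adj z p) (hpx : p ≠ x) (hpa : p ≠ a) (hp : deg U p = 2)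
    (hr : ((U.deleteEdges {s(a, x)}).deleteEdges {s(b, c)}).Reachable a x) :
    ∃ U' : SimpleGraph V, IsUnicyclic U' ∧ deg U' a = deg U a ∧
      (∀ w, deg U' w ≤ deg U a) ∧ GRM l U' < GRM l U := by
  classical
  have hza : z ≠ a := by rintro rfl; omega
  have hzb : z ≠ b := by rintro rfl; omega
  have hzx : z ≠ x := by rintro rfl; omega
  have hcx : c ≠ x := by rintro rfl; exact hac hax
  have hba : b ≠ a := hab.ne'
  have hxa : x ≠ a := hax.ne'
  obtain ⟨T, hT⟩ : ∃ T, T = U.deleteEdges {s(a, x)} := ⟨_, rfl⟩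
  rw [← hT] at hr
  obtain ⟨H, hH⟩ : ∃ H, H = T.deleteEdges {s(b, c)} := ⟨_, rfl⟩
  rw [← hH] at hr
  have hHadj : ∀ r t, H.Adj r t ↔ U.Adj r t ∧ s(r, t) ≠ s(a, x) ∧ s(r, t) ≠ s(b, c) := by
    intro r t; simp [hH, hT, deleteEdges_adj, and_assoc]; tauto
  have hUT : U = T ⊔ edge a x := hT ▸ deleteEdges_sup_edge hax
  have hTbc : T.Adj b c := by simp [hT, hbc, hba, hbx]
  have hTH : T = H ⊔ edge b c := hH ▸ deleteEdges_sup_edge hTbc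
  have hTax : ¬ T.Adj a x := by simp [hT]
  have hHbc : ¬ H.Adj b c := by simp [hH]
  have hHac : ¬ H.Adj a c := fun h => hac ((hHadj _ _).1 h).1
  have hHzx : ¬ H.Adj z x := fun h => hpx (eq_of_deg_eq_one hz hzp ((hHadj _ _).1 h).1)
  obtain ⟨K, hK⟩ : ∃ K, K = H ⊔ edge a c := ⟨_, rfl⟩
  have hKzx : ¬ K.Adj z x := by
    rw [hK, sup_edge_adj_ite H hca.symm]
    simp [hHzx, hza, hxa]
  have hd1 := deg_sup_edge T hax.ne hTax
  rw [← hUT] at hd1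
  have hd2 := deg_sup_edge H hbc.ne hHbc
  rw [← hTH] at hd2
  have hd3 := deg_sup_edge H hca.symm hHac
  rw [← hK] at hd3
  have hd4 := deg_sup_edge K hzx hKzx
  obtain ⟨W, hW⟩ : ∃ W, W = K ⊔ edge z x := ⟨_, rfl⟩
  rw [← hW] at hd4
  -- the degree of `b` drops by one and that of `z` grows by one
  have hdeg : ∀ w, deg W w + (if w = b then 1 else 0) = deg U w + (if w = z then 1 else 0) := by
    intro w
    rw [hd4, hd3, hd1, hd2]
    ring
  have hGU : GRM l U = edgeSum H (fun w => deg U w + l)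
      + ((deg U b : ℝ) + l) * ((deg U c : ℝ) + l) + ((deg U a : ℝ) + l) * ((deg U x : ℝ) + l) := by
    rw [GRM_eq_edgeSum]
    conv_lhs => rw [hUT]
    rw [edgeSum_sup_edge T _ hax.ne hTax, ← hUT]
    conv_lhs => rw [hTH]
    rw [edgeSum_sup_edge H _ hbc.ne hHbc]
  have hGW : GRM l W = edgeSum H (fun w => deg W w + l)
      + ((deg W a : ℝ) + l) * ((deg W c : ℝ) + l) + ((deg W z : ℝ) + l) * ((deg W x : ℝ) + l) := by
    rw [GRM_eq_edgeSum]
    conv_lhs => rw [hW]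
    rw [edgeSum_sup_edge K _ hzx hKzx, ← hW]
    conv_lhs => rw [hK]
    rw [edgeSum_sup_edge H _ hca.symm hHac]
  have hmove := edgeSum_move H (fun w => deg U w + l) (fun w => deg W w + l) b z (by
    intro w
    have : (deg W w : ℝ) + (if w = b then 1 else 0) = deg U w + (if w = z then 1 else 0) := by
      exact_mod_cast hdeg w
    linarith)
  have hWa : deg W a = deg U a := by simpa [hba.symm, hza.symm] using hdeg a
  have hWx : deg W x = deg U x := by simpa [hbx.symm, hzx.symm] using hdeg x
  have hWz : deg W z = 2 := by simpa [hzb, hz] using hdeg z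
  have hHW : H ≤ W := by rw [hW, hK]; exact le_sup_left.trans le_sup_left
  have hWac : W.Adj a c := by
    rw [hW, hK, sup_edge_adj_ite _ hzx, sup_edge_adj_ite _ hca.symm]; simp
  refine ⟨W, ⟨?_, ?_⟩, hWa, ?_, ?_⟩
  · refine connected_of_forall_adj_reachable hU.1 fun r t hrt => ?_
    have h1 : W.Reachable a x := hr.mono hHW
    have h2 : W.Reachable b c := by
      refine Reachable.trans (Adj.reachable (hHW ?_)) hWac.reachable
      rw [hHadj]
      simp [hab.symm, hba, hbx, hca.symm, hbc.ne]
    by_cases e1 : s(r, t) = s(a, x)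
    · rcases Sym2.eq_iff.1 e1 with ⟨rfl, rfl⟩ | ⟨rfl, rfl⟩
      exacts [h1, h1.symm]
    by_cases e2 : s(r, t) = s(b, c)
    · rcases Sym2.eq_iff.1 e2 with ⟨rfl, rfl⟩ | ⟨rfl, rfl⟩
      exacts [h2, h2.symm]
    exact (hHW ((hHadj _ _).2 ⟨hrt, e1, e2⟩)).reachable
  · have e1 := ncard_edgeSet_sup_edge T hax.ne hTax
    have e2 := ncard_edgeSet_sup_edge H hbc.ne hHbc
    have e3 := ncard_edgeSet_sup_edge H hca.symm hHac
    have e4 := ncard_edgeSet_sup_edge K hzx hKzx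
    have e5 := hU.2
    rw [← hUT] at e1
    rw [← hTH] at e2
    rw [← hK] at e3
    rw [← hW] at e4
    omega
  · intro w
    have h1 := hdeg w
    have h2 := hmax w
    by_cases hwz : w = z
    · subst hwz; omega
    · simp [hwz] at h1; omega
  · have hHb : ∀ t, H.Adj b t ↔ t = a := by
      intro t
      rw [hHadj]
      constructor
      · rintro ⟨h, -, h'⟩
        rcases eq_or_eq_of_deg_le_two hb.le hab.symm hbc hca.symm h with h | h
        · exact h
        · subst h; exact absurd rfl h'
      · rintro rfl
        simp [hab.symm, hba, hbx, hca.symm, hbc.ne]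
    have hzb' : H.Adj z b ↔ False := by
      rw [H.adj_comm, hHb]; simp [hza]
    simp only [hHb, hzb', Finset.sum_ite_eq', Finset.mem_univ, if_true, if_false] at hmove
    have hA : (3 : ℝ) ≤ deg U a := by exact_mod_cast ha
    have hX : (2 : ℝ) ≤ deg U x := by exact_mod_cast hx
    have hC : (deg U c : ℝ) ≤ 2 := by exact_mod_cast hc
    rw [hGU, hGW, hmove, hWa, hWx, hWz, hb]
    by_cases hzc : z = c
    · subst hzc
      have hHz : ∀ t, H.Adj z t ↔ False := by
        intro t
        rw [hHadj, iff_false]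
        rintro ⟨h, -, h'⟩
        obtain rfl := eq_of_deg_eq_one hz h hbc.symm
        exact h' Sym2.eq_swap
      simp only [hHz, if_false, Finset.sum_const_zero, hWz, hz]
      have := mul_nonneg (show (0 : ℝ) ≤ deg U a - 3 by linarith)
        (show (0 : ℝ) ≤ deg U x - 2 by linarith)
      push_cast
      nlinarith
    · have hHz : ∀ t, H.Adj z t ↔ t = p := by
        intro t
        rw [hHadj]
        constructor
        · rintro ⟨h, -⟩
          exact eq_of_deg_eq_one hz h hzp
        · rintro rfl
          simp [hzp, hza, hzx, hzb, hzc]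
      have hWc : deg W c = deg U c := by simpa [hbc.ne', Ne.symm hzc] using hdeg c
      simp only [hHz, Finset.sum_ite_eq', Finset.mem_univ, if_true, hWc, hp]
      have := mul_nonneg (show (0 : ℝ) ≤ deg U a - 2 by linarith)
        (show (0 : ℝ) ≤ deg U x - deg U c by linarith)
      push_cast
      nlinarith

end Surgeries

/-! ### Leaves of forests -/

/-- A vertex `b` with a neighbour in an acyclic graph `F` is joined to some vertex `z ≠ b` with
exactly one `F`-neighbour `p`: the end of a longest path from `b`. -/
lemma exists_leaf {V : Type*} [Fintype V] {F : SimpleGraph V} (hF : F.IsAcyclic) {b c : V}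
    (hbc : F.Adj b c) : ∃ z p, F.Reachable b z ∧ F.Reachable b p ∧ z ≠ b ∧ F.Adj z p ∧
      ∀ r, F.Adj z r → r = p := by
  let S : Set ℕ := {k | ∃ (z : V) (P : F.Walk b z), P.IsPath ∧ P.length = k}
  have h1 : 1 ∈ S := ⟨c, hbc.toWalk, by simp [Walk.cons_isPath_iff, hbc.ne], by simp⟩
  have hbdd : BddAbove S := by
    refine ⟨Fintype.card V, ?_⟩
    rintro k ⟨z, P, hP, rfl⟩
    exact hP.length_lt.le
  obtain ⟨z, P, hP, hlen⟩ := Nat.sSup_mem ⟨1, h1⟩ hbdd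
  have hlen1 : 1 ≤ P.length := hlen ▸ le_csSup hbdd h1
  have hnil : ¬ P.Nil := by
    intro h
    rw [← Walk.length_eq_zero_iff] at h
    omega
  have hpz := P.adj_penultimate hnil
  have hbz : F.Reachable b z := ⟨P⟩
  refine ⟨z, P.penultimate, hbz, hbz.trans hpz.symm.reachable, ?_, hpz.symm, fun r hr => ?_⟩
  · rintro rfl
    exact hnil (Walk.isPath_iff_nil.1 hP)
  · by_cases hrP : r ∈ P.support
    · exact hF.eq_penultimate_of_adj_end hP hr hrP
    · have : P.length + 1 ≤ sSup S :=
        le_csSup hbdd ⟨r, P.concat hr, hP.concat hrP hr, by simp⟩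
      omega

/-! ### A third nonleaf neighbour of `a` -/

theorem stmt11 {V : Type*} [Fintype V] (l : ℝ) (hl : -1/2 ≤ l)
    (n Δ : ℕ) (hΔ3 : 3 ≤ Δ) (U : SimpleGraph V) (hU : IsUnicyclic U)
    (hcard : Fintype.card V = n) (hmax : maxDeg U = Δ)
    (a : V) (ha : deg U a = Δ) (hacyc : OnCycle U a)
    (hnbrs : 3 ≤ {v : V | U.Adj a v ∧ 1 < deg U v}.ncard) :
    ∃ U' : SimpleGraph V, IsUnicyclic U' ∧ maxDeg U' = Δ ∧
      GRM l U' < GRM l U := by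
  classical
  subst hmax
  have hmax' : ∀ w, deg U w ≤ deg U a := fun w => ha ▸ deg_le_maxDeg U w
  have ha3 : 3 ≤ deg U a := ha ▸ hΔ3
  suffices h : ∃ U' : SimpleGraph V, IsUnicyclic U' ∧ deg U' a = deg U a ∧
      (∀ w, deg U' w ≤ deg U a) ∧ GRM l U' < GRM l U by
    obtain ⟨U', h1, h2, h3, h4⟩ := h
    exact ⟨U', h1, maxDeg_eq (h2.trans ha) (fun w => ha ▸ h3 w), h4⟩
  by_contra hno
  -- an edge `ax` of the cycle; its removal leaves a tree `T`
  obtain ⟨x, hax, hbr⟩ : ∃ x, U.Adj a x ∧ ¬ U.IsBridge s(a, x) := by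
    obtain ⟨u, w, hw, haw⟩ := hacyc
    have hw' := hw.rotate haw
    have hnil := hw'.not_nil
    refine ⟨(w.rotate a haw).snd, Walk.adj_snd hnil, fun hb => ?_⟩
    exact hb.notMem_edges_of_isCycle hw' (Walk.mk_start_snd_mem_edges hnil)
  obtain ⟨T, hT⟩ : ∃ T, T = U.deleteEdges {s(a, x)} := ⟨_, rfl⟩
  have hTadj : ∀ r t, T.Adj r t ↔ U.Adj r t ∧ s(r, t) ≠ s(a, x) := by
    intro r t; simp [hT, deleteEdges_adj]
  have hTc : T.Connected := hT ▸ hU.1.connected_delete_edge_of_not_isBridge hbr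
  have hTtree : T.IsTree := by
    rw [isTree_iff_connected_and_card]
    refine ⟨hTc, ?_⟩
    have h1 := ncard_edgeSet_sup_edge T hax.ne (by simp [hTadj])
    rw [← (hT ▸ deleteEdges_sup_edge hax : U = T ⊔ edge a x), hU.2] at h1
    rw [Nat.card_eq_fintype_card (α := V), h1]
    rfl
  have hx2 : 2 ≤ deg U x := by
    obtain ⟨r, hr, -⟩ := exists_adj_towards hTc hax.ne'
    rw [hTadj] at hr
    refine two_le_deg hax.symm hr.1 ?_
    rintro rfl
    exact hr.2 Sym2.eq_swap
  -- `q` is the rest of the cycle; the third neighbour `b` of `a` is off the cycle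
  obtain ⟨q, hq⟩ := (hTc.preconnected a x).exists_isPath
  obtain ⟨b, ⟨hab, hb2⟩, hbxy⟩ : ∃ b ∈ {v : V | U.Adj a v ∧ 1 < deg U v},
      b ∉ ({x, q.snd} : Set V) := by
    refine Set.exists_mem_notMem_of_ncard_lt_ncard ?_
    have h2 := Set.ncard_insert_le x {q.snd}
    rw [Set.ncard_singleton] at h2
    exact lt_of_le_of_lt h2 hnbrs
  simp only [Set.mem_insert_iff, Set.mem_singleton_iff, not_or] at hbxy
  obtain ⟨hbx, hby⟩ := hbxy
  have hTab : T.Adj a b := by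
    rw [hTadj]
    exact ⟨hab, by simp [hbx, hab.ne']⟩
  have hbq : b ∉ q.support := fun h => hby (hTtree.isAcyclic.eq_snd_of_adj_start hq hTab h)
  -- `F` isolates `a`, so its component at `b` is the branch of `T` hanging from `a` by `ab`
  obtain ⟨F, hF⟩ : ∃ F, F = T.deleteEdges {e | a ∈ e} := ⟨_, rfl⟩
  have hFT : F ≤ T := hF ▸ deleteEdges_le _
  have hFadj : ∀ r t, F.Adj r t ↔ U.Adj r t ∧ r ≠ a ∧ t ≠ a := by
    intro r t
    simp only [hF, deleteEdges_adj, hTadj, Set.mem_ofPred_eq, Sym2.mem_iff, Sym2.eq_iff, ne_eq]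
    constructor
    · grind
    · grind
  have hFac : F.IsAcyclic := hTtree.isAcyclic.anti hFT
  -- the branch of `b` meets the neighbourhood of `a` only in `b`
  have hgood : ∀ c, F.Reachable b c → c ≠ b → ¬ U.Adj a c := by
    intro c hbc hcb hac
    obtain ⟨P, hP⟩ := hbc.exists_isPath
    have haP : a ∉ P.support := by
      intro h
      obtain ⟨Q⟩ : F.Reachable a b := ⟨(P.takeUntil a h).reverse⟩
      cases Q with
      | nil => exact hab.ne rfl
      | cons h' _ => exact ((hFadj _ _).1 h').2.1 rfl
    have hR : (Walk.cons hTab (P.mapLe hFT)).IsPath := by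
      rw [Walk.cons_isPath_iff]
      exact ⟨hP.mapLe hFT, by simpa using haP⟩
    by_cases hcx : c = x
    · subst hcx
      have := (hTtree.isAcyclic.subsingleton_path _ _).elim ⟨_, hR⟩ ⟨q, hq⟩
      have h2 := congrArg (fun r : T.Path a c => (r : T.Walk a c).snd) this
      simp at h2
      exact hby h2
    · have hTac : T.Adj a c := by
        rw [hTadj]; exact ⟨hac, by simp [hcx, hac.ne']⟩
      have := hTtree.isAcyclic.eq_snd_of_adj_start hR hTac (by simp)
      exact hcb (by simpa using this)
  obtain ⟨c, hbc, hca⟩ := exists_adj_notMem (G := U) (v := b) {a} (by simpa using hb2)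
  rw [Finset.mem_singleton] at hca
  have hFbc : F.Adj b c := by rw [hFadj]; exact ⟨hbc, hab.ne', hca⟩
  obtain ⟨z, p, hbz, hbp, hzb, hFzp, hFz⟩ := exists_leaf hFac hFbc
  obtain ⟨hzp, hza, hpa⟩ := (hFadj _ _).1 hFzp
  have hz : deg U z = 1 := by
    refine deg_eq_one hzp fun r hr => ?_
    have hra : r ≠ a := by
      rintro rfl
      exact hgood z hbz hzb hr.symm
    exact hFz r ((hFadj _ _).2 ⟨hr, hza, hra⟩)
  have hpx : p ≠ x := by
    rintro rfl
    exact hgood p hbp (Ne.symm hbx) hax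
  -- otherwise a branch at `p` could be moved to the leaf `z`
  have hp : deg U p = 2 := by
    obtain ⟨s, hs, hs2, -⟩ := exists_adj_towards hU.1 hpa
    have hs2 : 2 ≤ deg U s := by
      rcases hs2 with rfl | h
      exacts [by omega, h]
    have hsz : s ≠ z := by rintro rfl; omega
    refine le_antisymm ?_ (two_le_deg hs hzp.symm hsz)
    by_contra! hp3
    obtain ⟨u, hu, hu'⟩ := exists_adj_notMem (G := U) (v := p) {s, z}
      (by rw [Finset.card_pair hsz]; omega)
    simp only [Finset.mem_insert, Finset.mem_singleton, not_or] at hu'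
    refine hno (exists_lt_of_branch hl hU hmax' hpa hp3 hu hu'.2 hz hzp hu.ne' hs
      (Ne.symm hu'.1) hs2 (Or.inl rfl) (Adj.reachable ?_))
    simp [deleteEdges_adj, hzp, hzp.ne, Ne.symm hu'.2]
  -- now a branch at any `v ≠ a` of degree at least three could be moved to `z`
  have hdeg2 : ∀ v, v ≠ a → deg U v ≤ 2 := by
    intro v hva
    by_contra! hv3
    have hvz : v ≠ z := by rintro rfl; omega
    have hvzn : ¬ U.Adj v z := by
      intro h
      obtain rfl := eq_of_deg_eq_one hz h.symm hzp
      omega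
    obtain ⟨s, hs, hs2, hsr⟩ := exists_adj_towards hU.1 hvz
    have hs2 : 2 ≤ deg U s := by
      rcases hs2 with rfl | h
      exacts [absurd hs hvzn, h]
    obtain ⟨u, hu, hu'⟩ := exists_adj_notMem (G := U) (v := v) {s, p}
      (Finset.card_le_two.trans_lt hv3)
    simp only [Finset.mem_insert, Finset.mem_singleton, not_or] at hu'
    refine hno (exists_lt_of_branch hl hU hmax' hva hv3 hu ?_ hz hzp hu'.2 hs
      (Ne.symm hu'.1) hs2 (Or.inr hp) (hsr u hu'.1))
    rintro rfl
    exact hvzn hu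
  refine hno (exists_lt_of_pendant hU hmax' ha3 hax hx2 hab hbx
    (le_antisymm (hdeg2 b hab.ne') hb2) hbc hca (hgood c hFbc.reachable hbc.ne') (hdeg2 c hca)
    hz hzp hpx hpa hp ?_)
  rw [← hT]
  refine ⟨q.toDeleteEdges _ fun e he he' => ?_⟩
  rw [Set.mem_singleton_iff] at he'
  subst he'
  exact hbq (q.fst_mem_support_of_mem_edges he)
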